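/- arXiv:2110.11651 — 2 statements merged into one kernel-verified Lean document; each statement's English description precedes it below -/
import Mathlib

section
/- Law of the few: in the local public good game under Assumption 1 (normality), fix a scalar ω > 0 and suppose w_i ≤ ω for all players i ∈ N as n → ∞. Then in every sociable Nash equilibrium the fraction of players in the core vanishes: lim_{n→∞} |C(ḡ*)|/n = 0. -/
open Finset Function

noncomputable section

/-- A directed network on `n` players: `g i j = true` iff `i` sponsors a link to `j`. -/
abbrev Net (n : ℕ) := Fin n → Fin n → Bool

/-- The number of links sponsored by player `i`. -/
def deg {n : ℕ} (g : Net n) (i : Fin n) : ℕ :=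
  (Finset.univ.filter fun j => g i j = true).card

/-- Spillovers received by player `i`: the provision of the players she links to. -/
def spill {n : ℕ} (x : Fin n → ℝ) (g : Net n) (i : Fin n) : ℝ :=
  ∑ j, if g i j = true then x j else 0

/-- Public good consumption of player `i`: own provision plus spillovers. -/
def cons {n : ℕ} (x : Fin n → ℝ) (g : Net n) (i : Fin n) : ℝ :=
  x i + spill x g i

/-- The primitives of the local public good game: prices of the private good, wealths,
linking cost, utilities and induced Engel curves. -/
structure Game (n : ℕ) where
  p : Fin n → ℝ
  w : Fin n → ℝ
  k : ℝ
  U : Fin n → ℝ → ℝ → ℝ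
  γ : Fin n → ℝ → ℝ
  p_pos : ∀ i, 0 < p i
  w_pos : ∀ i, 0 < w i
  k_nonneg : 0 ≤ k
  U_smooth : ∀ i, ContDiff ℝ 2 fun q : ℝ × ℝ => U i q.1 q.2
  U_sconcave : ∀ i, StrictConcaveOn ℝ Set.univ fun q : ℝ × ℝ => U i q.1 q.2
  U_mono_x : ∀ i b, StrictMono fun a => U i a b
  U_mono_y : ∀ i a, StrictMono fun b => U i a b

/-- Net social income of player `i`. -/
def netInc {n : ℕ} (G : Game n) (x : Fin n → ℝ) (g : Net n) (i : Fin n) : ℝ :=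
  G.w i - (deg g i : ℝ) * G.k + spill x g i

/-- Assumption 1 (normality): each Engel curve is continuously differentiable with
derivative in `[0,1]`. -/
def NormalGame {n : ℕ} (G : Game n) : Prop :=
  ∀ i, ContDiff ℝ 1 (G.γ i) ∧ ∀ t : ℝ, deriv (G.γ i) t ∈ Set.Icc (0 : ℝ) 1

/-- `G.γ i` is the demand (Engel curve) induced by `U i`: on the budget line with
income `m`, and under the constraint that public good consumption is at least the
spillovers `s`, the optimal public good consumption is `max (γ i m) s`. -/
def EngelCompatible {n : ℕ} (G : Game n) : Prop :=
  ∀ (i : Fin n) (m s xb yb : ℝ), 0 ≤ s → s ≤ xb → 0 ≤ yb → xb + G.p i * yb = m →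
    (∀ xb' yb' : ℝ, s ≤ xb' → 0 ≤ yb' → xb' + G.p i * yb' = m →
      G.U i xb' yb' ≤ G.U i xb yb) →
    xb = max (G.γ i m) s

/-- Budget feasibility of player `i`'s strategy. -/
def Feasible {n : ℕ} (G : Game n) (x y : Fin n → ℝ) (g : Net n) (i : Fin n) : Prop :=
  0 ≤ x i ∧ 0 ≤ y i ∧ g i i = false ∧
    x i + G.p i * y i + (deg g i : ℝ) * G.k = G.w i

/-- Player `i`'s payoff. -/
def payoff {n : ℕ} (G : Game n) (x y : Fin n → ℝ) (g : Net n) (i : Fin n) : ℝ :=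
  G.U i (cons x g i) (y i)

/-- Replace row `i` of the network `g` by `r` (a unilateral linking deviation). -/
def updRow {n : ℕ} (g : Net n) (i : Fin n) (r : Fin n → Bool) : Net n :=
  fun a b => if a = i then r b else g a b

/-- Nash equilibrium: every player's strategy is feasible and no feasible unilateral
deviation (in provision, private consumption and links) improves her payoff. -/
def Nash {n : ℕ} (G : Game n) (x y : Fin n → ℝ) (g : Net n) : Prop :=
  (∀ i, Feasible G x y g i) ∧
  ∀ (i : Fin n) (xi yi : ℝ) (r : Fin n → Bool),
    Feasible G (Function.update x i xi) (Function.update y i yi) (updRow g i r) i →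
    payoff G (Function.update x i xi) (Function.update y i yi) (updRow g i r) i ≤
      payoff G x y g i

/-- Sociable Nash equilibrium: a Nash equilibrium in which any payoff-equivalent
deviation only uses links already established in equilibrium (players indifferent
about a link establish it). -/
def Sociable {n : ℕ} (G : Game n) (x y : Fin n → ℝ) (g : Net n) : Prop :=
  Nash G x y g ∧
  ∀ (i : Fin n) (xi yi : ℝ) (r : Fin n → Bool),
    Feasible G (Function.update x i xi) (Function.update y i yi) (updRow g i r) i →
    payoff G (Function.update x i xi) (Function.update y i yi) (updRow g i r) i =
      payoff G x y g i →
    ∀ j, r j = true → g i j = true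

/-- Strict Nash equilibrium: any feasible unilateral deviation that differs from the
equilibrium strategy strictly reduces the deviator's payoff. -/
def StrictNash {n : ℕ} (G : Game n) (x y : Fin n → ℝ) (g : Net n) : Prop :=
  (∀ i, Feasible G x y g i) ∧
  ∀ (i : Fin n) (xi yi : ℝ) (r : Fin n → Bool),
    Feasible G (Function.update x i xi) (Function.update y i yi) (updRow g i r) i →
    (xi ≠ x i ∨ yi ≠ y i ∨ r ≠ g i) →
    payoff G (Function.update x i xi) (Function.update y i yi) (updRow g i r) i <
      payoff G x y g i

/-- `(xi, yi)` is an optimal bundle for player `i` in isolation (no links). -/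
def IsoOpt {n : ℕ} (G : Game n) (i : Fin n) (xi yi : ℝ) : Prop :=
  0 ≤ xi ∧ 0 ≤ yi ∧ xi + G.p i * yi = G.w i ∧
    ∀ xi' yi' : ℝ, 0 ≤ xi' → 0 ≤ yi' → xi' + G.p i * yi' = G.w i →
      G.U i xi' yi' ≤ G.U i xi yi

/-- `g` is a core-periphery graph with core `C`: core players are mutually linked
(with reciprocated links), periphery players have no links among themselves, and
every non-isolated periphery player links to some core player. -/
def IsCorePeriphery {n : ℕ} (g : Net n) (C : Finset (Fin n)) : Prop :=
  (∀ i ∈ C, ∀ j ∈ C, i ≠ j → g i j = true ∧ g j i = true) ∧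
  (∀ i ∉ C, ∀ j ∉ C, g i j = false) ∧
  (∀ i ∉ C, (∃ j, g i j = true ∨ g j i = true) → ∃ l ∈ C, g i l = true)

/-- `g` is a nested split graph with core `C`: a core-periphery graph in which the
neighborhoods of periphery players are nested. -/
def IsNestedSplit {n : ℕ} (g : Net n) (C : Finset (Fin n)) : Prop :=
  IsCorePeriphery g C ∧
  ∀ i ∉ C, ∀ j ∉ C, deg g j ≤ deg g i → ∀ l, g j l = true → g i l = true

/-- The core of an equilibrium: the players contributing strictly more than the
linking cost. -/
def coreOf {n : ℕ} (G : Game n) (x : Fin n → ℝ) : Finset (Fin n) :=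
  Finset.univ.filter fun i => G.k < x i

/-- Adjacency in the closure of `g`. -/
def adjBar {n : ℕ} (g : Net n) (i j : Fin n) : Prop :=
  g i j = true ∨ g j i = true

/-- All players' consumption choices are optimal given the (fixed) network. -/
def ConsOpt {n : ℕ} (G : Game n) (x y : Fin n → ℝ) (g : Net n) : Prop :=
  ∀ i, Feasible G x y g i ∧
    ∀ xi yi : ℝ,
      Feasible G (Function.update x i xi) (Function.update y i yi) g i →
      payoff G (Function.update x i xi) (Function.update y i yi) g i ≤ payoff G x y g i

/-- Assumption 2: identical preferences and identical price of the private good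
(hence identical Engel curves). -/
def Homogeneous {n : ℕ} (G : Game n) : Prop :=
  ∀ i j, G.U i = G.U j ∧ G.p i = G.p j ∧ G.γ i = G.γ j

/-- Social welfare: the sum of individual payoffs. -/
def welfare {n : ℕ} (G : Game n) (x y : Fin n → ℝ) (g : Net n) : ℝ :=
  ∑ i, G.U i (cons x g i) (y i)

/-- Aggregate feasibility for the social planner: total provision, total private
consumption and total linking costs are financed by total wealth. -/
def FeasAgg {n : ℕ} (G : Game n) (x y : Fin n → ℝ) (g : Net n) : Prop :=
  (∀ i, 0 ≤ x i) ∧ (∀ i, 0 ≤ y i) ∧ (∀ i, g i i = false) ∧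
    ∑ i, x i + ∑ i, G.p i * y i + (∑ i, (deg g i : ℝ)) * G.k ≤ ∑ i, G.w i

/-- Efficient (welfare-maximizing) configuration. -/
def Efficient {n : ℕ} (G : Game n) (x y : Fin n → ℝ) (g : Net n) : Prop :=
  FeasAgg G x y g ∧
  ∀ (x' y' : Fin n → ℝ) (g' : Net n), FeasAgg G x' y' g' →
    welfare G x' y' g' ≤ welfare G x y g

/-- The same game with a different linking cost. -/
def Game.withCost {n : ℕ} (G : Game n) (k' : ℝ) (h : 0 ≤ k') : Game n :=
  { G with k := k', k_nonneg := h }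

/-- The same game with a different wealth distribution. -/
def Game.withWealth {n : ℕ} (G : Game n) (w' : Fin n → ℝ) (h : ∀ i, 0 < w' i) : Game n :=
  { G with w := w', w_pos := h }

/-- Budget feasibility with personalized public good prices `ρ` and lump-sum taxes `τ`. -/
def FeasibleT {n : ℕ} (G : Game n) (ρ τ : Fin n → ℝ) (x y : Fin n → ℝ) (g : Net n)
    (i : Fin n) : Prop :=
  0 ≤ x i ∧ 0 ≤ y i ∧ g i i = false ∧
    ρ i * x i + G.p i * y i + (deg g i : ℝ) * G.k = G.w i - τ i

/-- Nash equilibrium under personalized public good prices `ρ` and lump-sum taxes `τ`. -/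
def NashT {n : ℕ} (G : Game n) (ρ τ : Fin n → ℝ) (x y : Fin n → ℝ) (g : Net n) : Prop :=
  (∀ i, FeasibleT G ρ τ x y g i) ∧
  ∀ (i : Fin n) (xi yi : ℝ) (r : Fin n → Bool),
    FeasibleT G ρ τ (Function.update x i xi) (Function.update y i yi) (updRow g i r) i →
    payoff G (Function.update x i xi) (Function.update y i yi) (updRow g i r) i ≤
      payoff G x y g i

/-- Adding a link from `i` to `j` raises the number of links of `i` by one. -/
lemma deg_updRow_update {n : ℕ} (g : Net n) {i j : Fin n} (hg : g i j = false) :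
    deg (updRow g i (Function.update (g i) j true)) i = deg g i + 1 := by
  have hset : (Finset.univ.filter fun l =>
      updRow g i (Function.update (g i) j true) i l = true) =
      insert j (Finset.univ.filter fun l => g i l = true) := by
    ext l
    by_cases hl : l = j <;> simp [updRow, Function.update_apply, hl]
  rw [deg, hset, Finset.card_insert_of_notMem (by simp [hg]), deg]

/-- Adding a link from `i` to `j` raises the spillovers of `i` by the provision of `j`,
whatever `i` herself provides. -/
lemma spill_updRow_update {n : ℕ} (x : Fin n → ℝ) (g : Net n) {i j : Fin n} (xi : ℝ)
    (hij : i ≠ j) (hii : g i i = false) (hg : g i j = false) :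
    spill (Function.update x i xi) (updRow g i (Function.update (g i) j true)) i =
      spill x g i + x j := by
  have hsum : spill x g i + x j =
      ∑ l, ((if g i l = true then x l else 0) + if l = j then x l else 0) := by
    rw [Finset.sum_add_distrib, Finset.sum_ite_eq' Finset.univ j x]
    simp [spill]
  rw [hsum, spill]
  refine Finset.sum_congr rfl fun l _ => ?_
  by_cases hl : l = j
  · subst hl
    simp [updRow, hg, Function.update_of_ne hij.symm]
  · by_cases hli : l = i
    · subst hli
      simp [updRow, hij, hii]
    · simp [updRow, hl, hli]

/-- In a Nash equilibrium, players providing more than the linking cost link to each other. -/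
lemma Nash.link_of_lt {n : ℕ} {G : Game n} {x y : Fin n → ℝ} {g : Net n} (h : Nash G x y g)
    {i j : Fin n} (hij : i ≠ j) (hi : G.k < x i) (hj : G.k < x j) : g i j = true := by
  by_contra hg
  rw [Bool.not_eq_true] at hg
  obtain ⟨-, hy, hii, hbudget⟩ := h.1 i
  have hdev := h.2 i (x i - G.k) (y i) (Function.update (g i) j true) (by
    refine ⟨by simpa using hi.le, by simpa using hy, by simp [updRow, hij, hii], ?_⟩
    rw [deg_updRow_update g hg]
    push_cast
    simp only [Function.update_self]
    linarith)
  unfold payoff _root_.cons at hdev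
  rw [spill_updRow_update x g _ hij hii hg] at hdev
  simp only [Function.update_self] at hdev
  exact (G.U_mono_x i (y i) (by linarith)).not_ge hdev

/-- In a Nash equilibrium with wealths at most `ω`, the core has at most `ω / k + 1` players. -/
lemma Nash.card_core_le {n : ℕ} {G : Game n} {x y : Fin n → ℝ} {g : Net n} (h : Nash G x y g)
    {ω : ℝ} (hω : 0 ≤ ω) (hk : 0 < G.k) (hw : ∀ i, G.w i ≤ ω) :
    ((coreOf G x).card : ℝ) ≤ ω / G.k + 1 := by
  rcases (coreOf G x).eq_empty_or_nonempty with hC | ⟨i, hi⟩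
  · rw [hC, Finset.card_empty, Nat.cast_zero]
    positivity
  have hsub : (coreOf G x).erase i ⊆ Finset.univ.filter fun j => g i j = true := by
    intro j hj
    simp only [coreOf, Finset.mem_erase, Finset.mem_filter, Finset.mem_univ, true_and] at hi hj ⊢
    exact h.link_of_lt hj.1.symm hi hj.2
  have hcard : (coreOf G x).card ≤ deg g i + 1 := by
    rw [← Finset.card_erase_add_one hi]
    exact Nat.add_le_add_right (Finset.card_le_card hsub) 1
  have hdeg : (deg g i : ℝ) ≤ ω / G.k := by
    obtain ⟨hx, hy, -, hbudget⟩ := h.1 i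
    rw [le_div_iff₀ hk]
    linarith [hw i, mul_nonneg (G.p_pos i).le hy]
  calc ((coreOf G x).card : ℝ) ≤ (deg g i : ℝ) + 1 := by exact_mod_cast hcard
    _ ≤ ω / G.k + 1 := by linarith

/-- law of the few: along a sequence of games with common linking cost
`k > 0`, Assumption 1 and wealths uniformly bounded by `ω`, the fraction of players
in the core of any sequence of sociable Nash equilibria vanishes as `n → ∞`. -/
theorem law_of_the_few (ω k : ℝ) (hω : 0 < ω) (hk : 0 < k)
    (G : ∀ n : ℕ, Game n) (hGk : ∀ n, (G n).k = k)
    (hN : ∀ n, NormalGame (G n)) (hEC : ∀ n, EngelCompatible (G n))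
    (hw : ∀ n (i : Fin n), (G n).w i ≤ ω)
    (x y : ∀ n : ℕ, Fin n → ℝ) (g : ∀ n : ℕ, Net n)
    (hS : ∀ n, Sociable (G n) (x n) (y n) (g n)) :
    Filter.Tendsto
      (fun n : ℕ => (((Finset.univ.filter fun i : Fin n => k < x n i).card : ℝ) / n))
      Filter.atTop (nhds 0) := by
  refine squeeze_zero (fun n => by positivity) (fun n => ?_)
    (tendsto_const_div_atTop_nhds_zero_nat (ω / k + 1))
  have hcore := (hS n).1.card_core_le hω.le (by rw [hGk n]; exact hk) (hw n)
  rw [coreOf, hGk n] at hcore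
  gcongr
end
end

section
/- In the local public good game under Assumptions 1 and 2, let (x*, y*, g*) be a sociable Nash equilibrium and let i, j be periphery players with identical neighborhoods, N_i(g*) = N_j(g*). Then x̄*_i ≥ x̄*_j, x*_i ≥ x*_j and y*_i ≥ y*_j if and only if w_i ≥ w_j. -/
open Finset Function

noncomputable section

/-- Under normality an Engel curve is monotone, with increments bounded
by those of income. -/
theorem NormalGame.increment_bounds {n : ℕ} {G : Game n} (hN : NormalGame G) (i : Fin n)
    {a b : ℝ} (hab : a ≤ b) : G.γ i a ≤ G.γ i b ∧ G.γ i b - G.γ i a ≤ b - a := by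
  obtain ⟨hC, hd⟩ := hN i
  have hdiff : Differentiable ℝ (G.γ i) := hC.differentiable one_ne_zero
  refine ⟨monotone_of_deriv_nonneg hdiff (fun t => (hd t).1) hab, ?_⟩
  simpa using image_sub_le_mul_sub_of_deriv_le hdiff (fun t => (hd t).2) hab

theorem updRow_self {n : ℕ} (g : Net n) (i : Fin n) : updRow g i (g i) = g := by
  funext a b
  by_cases h : a = i <;> simp [updRow, h]

theorem spill_update_self {n : ℕ} (x : Fin n → ℝ) (g : Net n) (i : Fin n) (hg : g i i = false)
    (t : ℝ) : spill (Function.update x i t) g i = spill x g i := by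
  unfold spill
  refine Finset.sum_congr rfl fun l _ => ?_
  by_cases h : l = i
  · subst h; simp [hg]
  · simp [h]

/-- Public good consumption in a Nash equilibrium is the demand at the net social income,
truncated below by the spillovers. -/
theorem Nash.cons_eq_max {n : ℕ} {G : Game n} {x y : Fin n → ℝ} {g : Net n} (h : Nash G x y g)
    (hEC : EngelCompatible G) (i : Fin n) :
    cons x g i = max (G.γ i (netInc G x g i)) (spill x g i) := by
  obtain ⟨hx, hy, hg, hb⟩ := h.1 i
  have hs : 0 ≤ spill x g i := Finset.sum_nonneg fun l _ => by
    split_ifs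
    exacts [(h.1 l).1, le_rfl]
  refine hEC i _ _ _ (y i) hs (by unfold _root_.cons; linarith) hy
    (by unfold _root_.cons netInc; linarith) fun xb yb hxb hyb hm => ?_
  have hdev := h.2 i (xb - spill x g i) yb (g i)
  rw [updRow_self] at hdev
  unfold payoff _root_.cons Feasible at hdev
  simp only [spill_update_self x g i hg, Function.update_self, sub_add_cancel] at hdev
  exact hdev ⟨by linarith, hyb, hg, by unfold netInc at hm; linarith⟩

/-- under Assumptions 1 and 2, for two periphery players with identical
neighborhoods, consumption of both goods and own contribution are ordered as wealth. -/
theorem periphery_same_neighbors {n : ℕ} (G : Game n) (hk : 0 < G.k)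
    (hN : NormalGame G) (hEC : EngelCompatible G) (hH : Homogeneous G)
    (x y : Fin n → ℝ) (g : Net n) (hS : Sociable G x y g)
    (i j : Fin n) (hi : i ∉ coreOf G x) (hj : j ∉ coreOf G x)
    (hnbr : ∀ l, g i l = g j l) :
    (cons x g j ≤ cons x g i ∧ x j ≤ x i ∧ y j ≤ y i) ↔ G.w j ≤ G.w i := by
  have hdeg : deg g i = deg g j := by simp [deg, hnbr]
  have hspill : spill x g i = spill x g j := by simp [spill, hnbr]
  obtain ⟨-, -, -, hbi⟩ := hS.1.1 i
  obtain ⟨-, -, -, hbj⟩ := hS.1.1 j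
  obtain ⟨-, hp, hγ⟩ := hH i j
  rw [hdeg, hp] at hbi
  have hpos := G.p_pos j
  constructor
  · rintro ⟨-, hx, hy⟩
    linarith [mul_le_mul_of_nonneg_left hy hpos.le]
  · intro hw
    have hi_eq := hS.1.cons_eq_max hEC i
    have hj_eq := hS.1.cons_eq_max hEC j
    have hinc : netInc G x g i - netInc G x g j = G.w i - G.w j := by
      unfold netInc
      rw [hdeg, hspill]
      ring
    obtain ⟨hmono, hlip⟩ := hN.increment_bounds j
      (show netInc G x g j ≤ netInc G x g i by linarith)
    rw [hγ, hspill] at hi_eq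
    have hle : cons x g j ≤ cons x g i := by
      rw [hi_eq, hj_eq]
      exact max_le_max_right _ hmono
    have hgap : cons x g i ≤ cons x g j + (G.w i - G.w j) := by
      rw [hi_eq, hj_eq]
      apply max_le
      · linarith [le_max_left (G.γ j (netInc G x g j)) (spill x g j)]
      · linarith [le_max_right (G.γ j (netInc G x g j)) (spill x g j)]
    have hdiff : cons x g i - cons x g j = x i - x j := by
      unfold _root_.cons
      rw [hspill]
      ring
    exact ⟨hle, by linarith, le_of_mul_le_mul_left (by linarith) hpos⟩
end
end
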